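/- arXiv:2506.07071 — 4 statements merged into one kernel-verified Lean document; each statement's English description precedes it below -/
import Mathlib

section
/- Let (E,𝒞,r) be a semimatroid and let X ⊆ Y be flats of 𝒞. Then the Möbius function μ of the poset ℒ(𝒞) of flats satisfies μ(X,Y) = Σ_Z (−1)^{|Z \ X|}, where the sum ranges over all central sets Z ∈ 𝒞 with X ⊆ Z ⊆ Y and cl(Z) = Y. -/
/-- A semimatroid on a finite ground set `E`: a nonempty, subset-closed collection `C`
of "central" subsets of `E`, together with a rank function `r` satisfying (SR1)-(SR5). -/
structure Semimatroid (E : Type*) [DecidableEq E] [Fintype E] where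
  C : Finset (Finset E)
  r : Finset E → ℕ
  C_nonempty : C.Nonempty
  mem_of_subset : ∀ ⦃X Y : Finset E⦄, X ∈ C → Y ⊆ X → Y ∈ C
  r_le_card : ∀ ⦃X : Finset E⦄, X ∈ C → r X ≤ X.card
  r_mono : ∀ ⦃X Y : Finset E⦄, X ∈ C → Y ∈ C → X ⊆ Y → r X ≤ r Y
  submodular : ∀ ⦃X Y : Finset E⦄, X ∈ C → Y ∈ C → X ∪ Y ∈ C →
    r (X ∩ Y) + r (X ∪ Y) ≤ r X + r Y
  union_mem : ∀ ⦃X Y : Finset E⦄, X ∈ C → Y ∈ C → r X = r (X ∩ Y) → X ∪ Y ∈ C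
  augment : ∀ ⦃X Y : Finset E⦄, X ∈ C → Y ∈ C → r X < r Y →
    ∃ e ∈ Y \ X, insert e X ∈ C

namespace Semimatroid

variable {E : Type*} [DecidableEq E] [Fintype E] (S : Semimatroid E)

/-- The rank `r(𝒞)` of the semimatroid: the common rank of the maximal central sets. -/
def rank : ℕ := S.C.sup S.r

/-- The closure of a central set `X`:
`cl X = {e ∈ E : X ∪ {e} ∈ 𝒞 and r (X ∪ {e}) = r X}`. -/
def cl (X : Finset E) : Finset E :=
  Finset.univ.filter fun e => insert e X ∈ S.C ∧ S.r (insert e X) = S.r X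

/-- The flats of the semimatroid: central sets `X` with `cl X = X`. -/
def flats : Finset (Finset E) := S.C.filter fun X => S.cl X = X

/-- The characteristic polynomial `χ(𝒞;t) = Σ_{X ∈ 𝒞} (−1)^{|X|} t^{r(𝒞)−r(X)}`. -/
noncomputable def charPoly : Polynomial ℤ :=
  ∑ A ∈ S.C, (-1 : Polynomial ℤ) ^ A.card * Polynomial.X ^ (S.rank - S.r A)

end Semimatroid

namespace Semimatroid

theorem aux_union {E : Type*} [DecidableEq E] [Fintype E] (S : Semimatroid E)
    {Z : Finset E} (hZ : Z ∈ S.C) (A : Finset E) (hA : A ⊆ S.cl Z) :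
    Z ∪ A ∈ S.C ∧ S.r (Z ∪ A) = S.r Z := by
  induction A using Finset.induction_on with
  | empty => simpa using hZ
  | insert e A _ ih =>
    obtain ⟨h1, h2⟩ := ih (fun x hx => hA (Finset.mem_insert_of_mem hx))
    have he := hA (Finset.mem_insert_self e A)
    simp only [cl, Finset.mem_filter, Finset.mem_univ, true_and] at he
    obtain ⟨h3, h4⟩ := he
    have hsub : Z ⊆ (Z ∪ A) ∩ insert e Z :=
      Finset.subset_inter Finset.subset_union_left (Finset.subset_insert _ _)
    have hI : (Z ∪ A) ∩ insert e Z ∈ S.C := S.mem_of_subset h1 Finset.inter_subset_left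
    have h5 := S.r_mono hZ hI hsub
    have h6 := S.r_mono hI h1 Finset.inter_subset_left
    have hU := S.union_mem h1 h3 (by omega)
    have h7 := S.submodular h1 h3 hU
    have hEq : (Z ∪ A) ∪ insert e Z = Z ∪ insert e A := by
      ext x; simp only [Finset.mem_union, Finset.mem_insert]; tauto
    rw [hEq] at hU h7
    have h8 := S.r_mono hZ hU Finset.subset_union_left
    exact ⟨hU, by omega⟩

theorem subset_cl {E : Type*} [DecidableEq E] [Fintype E] (S : Semimatroid E)
    {Z : Finset E} (hZ : Z ∈ S.C) : Z ⊆ S.cl Z := by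
  intro x hx
  simp [cl, Finset.insert_eq_of_mem hx, hZ]

theorem cl_mem {E : Type*} [DecidableEq E] [Fintype E] (S : Semimatroid E)
    {Z : Finset E} (hZ : Z ∈ S.C) : S.cl Z ∈ S.C ∧ S.r (S.cl Z) = S.r Z := by
  have h := S.aux_union hZ (S.cl Z) (Finset.Subset.refl _)
  rwa [Finset.union_eq_right.2 (S.subset_cl hZ)] at h

theorem cl_mem_flats {E : Type*} [DecidableEq E] [Fintype E] (S : Semimatroid E)
    {Z : Finset E} (hZ : Z ∈ S.C) : S.cl Z ∈ S.flats := by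
  obtain ⟨h1, h2⟩ := S.cl_mem hZ
  refine Finset.mem_filter.2 ⟨h1, Finset.Subset.antisymm ?_ (S.subset_cl h1)⟩
  intro e he
  have he' : insert e (S.cl Z) ∈ S.C ∧ S.r (insert e (S.cl Z)) = S.r (S.cl Z) :=
    (Finset.mem_filter.1 he).2
  have hs : insert e Z ⊆ insert e (S.cl Z) := Finset.insert_subset_insert _ (S.subset_cl hZ)
  have h3 := S.mem_of_subset he'.1 hs
  have h4 := S.r_mono h3 he'.1 hs
  have h5 := S.r_mono hZ h3 (Finset.subset_insert _ _)
  exact Finset.mem_filter.2 ⟨Finset.mem_univ _, h3, by omega⟩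

theorem cl_subset {E : Type*} [DecidableEq E] [Fintype E] (S : Semimatroid E)
    {Z Y : Finset E} (hY : Y ∈ S.flats) (hZY : Z ⊆ Y) : S.cl Z ⊆ Y := by
  obtain ⟨hYC, hcl⟩ := Finset.mem_filter.1 hY
  have hZ := S.mem_of_subset hYC hZY
  intro e he
  have he' : insert e Z ∈ S.C ∧ S.r (insert e Z) = S.r Z := (Finset.mem_filter.1 he).2
  have hsub : Z ⊆ insert e Z ∩ Y := Finset.subset_inter (Finset.subset_insert _ _) hZY
  have hI : insert e Z ∩ Y ∈ S.C := S.mem_of_subset hYC Finset.inter_subset_right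
  have h5 := S.r_mono hZ hI hsub
  have h6 := S.r_mono hI he'.1 Finset.inter_subset_left
  have hU := S.union_mem he'.1 hYC (by omega)
  have h7 := S.submodular he'.1 hYC hU
  have hEq : insert e Z ∪ Y = insert e Y := by
    rw [Finset.insert_union, Finset.union_eq_right.2 hZY]
  rw [hEq] at hU h7
  have h8 := S.r_mono hYC hU (Finset.subset_insert _ _)
  rw [← hcl]
  exact Finset.mem_filter.2 ⟨Finset.mem_univ _, hU, by omega⟩

theorem sum_interval {E : Type*} [DecidableEq E] {X Y : Finset E} (hXY : X ⊆ Y) (hne : X ≠ Y) :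
    ∑ Z ∈ Y.powerset.filter (fun Z => X ⊆ Z), (-1 : ℤ) ^ (Z \ X).card = 0 := by
  have hD : (Y \ X).Nonempty := by
    rw [Finset.sdiff_nonempty]
    exact fun h => hne (Finset.Subset.antisymm hXY h)
  rw [← Finset.sum_powerset_neg_one_pow_card_of_nonempty hD]
  refine Finset.sum_bij' (fun Z _ => Z \ X) (fun A _ => X ∪ A) ?_ ?_ ?_ ?_ ?_
  · intro Z hZ
    simp only [Finset.mem_filter, Finset.mem_powerset] at hZ ⊢
    exact Finset.sdiff_subset_sdiff hZ.1 (Finset.Subset.refl _)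
  · intro A hA
    simp only [Finset.mem_filter, Finset.mem_powerset] at hA ⊢
    exact ⟨Finset.union_subset hXY (hA.trans Finset.sdiff_subset), Finset.subset_union_left⟩
  · intro Z hZ
    simp only [Finset.mem_filter, Finset.mem_powerset] at hZ
    exact Finset.union_sdiff_of_subset hZ.2
  · intro A hA
    simp only [Finset.mem_powerset] at hA
    ext x
    have := @hA x
    simp only [Finset.mem_sdiff, Finset.mem_union] at this ⊢
    tauto
  · intro Z _
    rfl

theorem sum_closure {E : Type*} [DecidableEq E] [Fintype E] (S : Semimatroid E)
    {X Y : Finset E} (hY : Y ∈ S.flats) (hXY : X ⊆ Y) (hne : X ≠ Y) :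
    ∑ F ∈ S.flats.filter (fun F => X ⊆ F ∧ F ⊆ Y),
      ∑ Z ∈ S.C.filter (fun Z => X ⊆ Z ∧ Z ⊆ F ∧ S.cl Z = F), (-1 : ℤ) ^ (Z \ X).card = 0 := by
  have hYC := (Finset.mem_filter.1 hY).1
  rw [← sum_interval hXY hne]
  rw [← Finset.sum_fiberwise_of_maps_to (s := Y.powerset.filter (fun Z => X ⊆ Z))
    (t := S.flats.filter (fun F => X ⊆ F ∧ F ⊆ Y)) (g := S.cl)]
  · refine Finset.sum_congr rfl fun F hF => Finset.sum_congr ?_ fun _ _ => rfl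
    have hF' := (Finset.mem_filter.1 hF).2
    ext Z
    simp only [Finset.mem_filter, Finset.mem_powerset]
    constructor
    · rintro ⟨_, h1, h2, h3⟩
      exact ⟨⟨h2.trans hF'.2, h1⟩, h3⟩
    · rintro ⟨⟨h1, h2⟩, h3⟩
      have hZ := S.mem_of_subset hYC h1
      exact ⟨hZ, h2, h3 ▸ S.subset_cl hZ, h3⟩
  · intro Z hZ
    simp only [Finset.mem_filter, Finset.mem_powerset] at hZ
    have hZC := S.mem_of_subset hYC hZ.1
    exact Finset.mem_filter.2
      ⟨S.cl_mem_flats hZC, hZ.2.trans (S.subset_cl hZC), S.cl_subset hY hZ.1⟩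

end Semimatroid

open Finset in
/-- For flats `X ⊆ Y` of a semimatroid `𝒞`, the Möbius function of the
poset `ℒ(𝒞)` of flats satisfies `μ(X,Y) = Σ_{Z ∈ 𝒞, X ⊆ Z ⊆ Y, cl Z = Y} (−1)^{|Z \ X|}`. -/
theorem Semimatroid.moebius_flats_eq
    {E : Type*} [DecidableEq E] [Fintype E] (S : Semimatroid E)
    (μ : Finset E → Finset E → ℤ)
    (hμ_refl : ∀ Z ∈ S.flats, μ Z Z = 1)
    (hμ_rec : ∀ X ∈ S.flats, ∀ Y ∈ S.flats, X ⊆ Y → X ≠ Y →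
      ∑ Z ∈ S.flats.filter (fun Z => X ⊆ Z ∧ Z ⊆ Y), μ X Z = 0)
    (X Y : Finset E) (hX : X ∈ S.flats) (hY : Y ∈ S.flats) (hXY : X ⊆ Y) :
    μ X Y = ∑ Z ∈ S.C.filter (fun Z => X ⊆ Z ∧ Z ⊆ Y ∧ S.cl Z = Y),
      (-1 : ℤ) ^ (Z \ X).card := by
  induction Y using Finset.strongInduction with
  | H Y ih =>
    by_cases hne : X = Y
    · subst hne
      obtain ⟨hXC, hcl⟩ := Finset.mem_filter.1 hX
      have hs : S.C.filter (fun Z => X ⊆ Z ∧ Z ⊆ X ∧ S.cl Z = X) = {X} := by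
        ext Z
        simp only [Finset.mem_filter, Finset.mem_singleton]
        constructor
        · rintro ⟨_, h1, h2, _⟩
          exact Finset.Subset.antisymm h2 h1
        · rintro rfl
          exact ⟨hXC, Finset.Subset.refl _, Finset.Subset.refl _, hcl⟩
      rw [hs, hμ_refl X hX]
      simp
    · have h1 := hμ_rec X hX Y hY hXY hne
      have h2 := S.sum_closure hY hXY hne
      have hmem : Y ∈ S.flats.filter (fun Z => X ⊆ Z ∧ Z ⊆ Y) :=
        Finset.mem_filter.2 ⟨hY, hXY, Finset.Subset.refl _⟩
      rw [← Finset.add_sum_erase _ _ hmem] at h1 h2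
      have h3 : ∑ F ∈ (S.flats.filter (fun Z => X ⊆ Z ∧ Z ⊆ Y)).erase Y, μ X F =
          ∑ F ∈ (S.flats.filter (fun Z => X ⊆ Z ∧ Z ⊆ Y)).erase Y,
          ∑ Z ∈ S.C.filter (fun Z => X ⊆ Z ∧ Z ⊆ F ∧ S.cl Z = F), (-1 : ℤ) ^ (Z \ X).card := by
        refine Finset.sum_congr rfl fun F hF => ?_
        obtain ⟨hFY, hF⟩ := Finset.mem_erase.1 hF
        obtain ⟨hF1, hF2, hF3⟩ := Finset.mem_filter.1 hF
        exact ih F (Finset.ssubset_iff_subset_ne.2 ⟨hF3, hFY⟩) hF1 hF2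
      linarith
end

section
/- Let (E,𝒞,r) be a semimatroid without loops. Then ∅ is the least element of ℒ(𝒞) and the characteristic polynomial satisfies χ(𝒞;t) = Σ_{X ∈ ℒ(𝒞)} μ(∅,X) · t^{r(𝒞)−r(X)}, where μ is the Möbius function of the poset ℒ(𝒞). -/
namespace Semimatroid

section Helpers

variable {E : Type*} [DecidableEq E] [Fintype E] (S : Semimatroid E)

theorem mem_cl {X : Finset E} {e : E} :
    e ∈ S.cl X ↔ insert e X ∈ S.C ∧ S.r (insert e X) = S.r X := by
  simp [cl]

theorem mem_flats {X : Finset E} : X ∈ S.flats ↔ X ∈ S.C ∧ S.cl X = X := by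
  simp [flats]

theorem subset_cl_s1 {X : Finset E} (hX : X ∈ S.C) : X ⊆ S.cl X := by
  intro e he
  rw [mem_cl, Finset.insert_eq_of_mem he]
  exact ⟨hX, rfl⟩

theorem union_of_subset_cl {X : Finset E} (hX : X ∈ S.C) (T : Finset E) :
    T ⊆ S.cl X → X ∪ T ∈ S.C ∧ S.r (X ∪ T) = S.r X := by
  induction T using Finset.induction_on with
  | empty => intro _; simpa using hX
  | insert e T _ ih =>
    intro h
    obtain ⟨hA, hrA⟩ := ih ((Finset.subset_insert e T).trans h)
    obtain ⟨hB, hrB⟩ := S.mem_cl.1 (h (Finset.mem_insert_self e T))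
    have hI : (X ∪ T) ∩ insert e X ∈ S.C := S.mem_of_subset hA Finset.inter_subset_left
    have h1 := S.r_mono hX hI (Finset.subset_inter Finset.subset_union_left
      (Finset.subset_insert e X))
    have h2 := S.r_mono hI hA Finset.inter_subset_left
    have hU := S.union_mem hA hB (by omega)
    have h3 := S.submodular hA hB hU
    have h4 := S.r_mono hA hU Finset.subset_union_left
    have hE : X ∪ insert e T = (X ∪ T) ∪ insert e X := by
      ext a; simp only [Finset.mem_union, Finset.mem_insert]; tauto
    rw [hE]
    exact ⟨hU, by omega⟩

theorem cl_mem_s1 {X : Finset E} (hX : X ∈ S.C) : S.cl X ∈ S.C ∧ S.r (S.cl X) = S.r X := by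
  have h := S.union_of_subset_cl hX (S.cl X) (Finset.Subset.refl _)
  rwa [Finset.union_eq_right.2 (S.subset_cl_s1 hX)] at h

theorem cl_mem_flats_s1 {X : Finset E} (hX : X ∈ S.C) : S.cl X ∈ S.flats := by
  obtain ⟨hc, hr⟩ := S.cl_mem_s1 hX
  refine S.mem_flats.2 ⟨hc, Finset.Subset.antisymm ?_ (S.subset_cl_s1 hc)⟩
  intro e he
  obtain ⟨h1, h2⟩ := S.mem_cl.1 he
  have hs : insert e X ⊆ insert e (S.cl X) := Finset.insert_subset_insert e (S.subset_cl_s1 hX)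
  have hi := S.mem_of_subset h1 hs
  have h3 := S.r_mono hi h1 hs
  have h4 := S.r_mono hX hi (Finset.subset_insert e X)
  exact S.mem_cl.2 ⟨hi, by omega⟩

theorem cl_subset_s1 {A F : Finset E} (hF : F ∈ S.flats) (hA : A ⊆ F) : S.cl A ⊆ F := by
  obtain ⟨hFC, hcl⟩ := S.mem_flats.1 hF
  have hAC := S.mem_of_subset hFC hA
  intro e he
  obtain ⟨hB, hrB⟩ := S.mem_cl.1 he
  have hI : insert e A ∩ F ∈ S.C := S.mem_of_subset hFC Finset.inter_subset_right
  have h1 := S.r_mono hAC hI (Finset.subset_inter (Finset.subset_insert e A) hA)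
  have h2 := S.r_mono hI hB Finset.inter_subset_left
  have hU := S.union_mem hB hFC (by omega)
  have h3 := S.submodular hB hFC hU
  have h4 := S.r_mono hFC hU Finset.subset_union_right
  have hE : insert e A ∪ F = insert e F := by
    rw [Finset.insert_union, Finset.union_eq_right.2 hA]
  rw [hE] at hU h3 h4
  rw [← hcl]
  exact S.mem_cl.2 ⟨hU, by omega⟩

theorem cl_subset_iff {A F : Finset E} (hF : F ∈ S.flats) (hA : A ∈ S.C) :
    S.cl A ⊆ F ↔ A ⊆ F :=
  ⟨fun h => (S.subset_cl_s1 hA).trans h, S.cl_subset_s1 hF⟩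

/-- Signed count of the central sets with closure `F`. -/
def signedCount (F : Finset E) : ℤ := ∑ A ∈ S.C with S.cl A = F, (-1 : ℤ) ^ A.card

theorem sum_signedCount {F : Finset E} (hF : F ∈ S.flats) :
    ∑ Z ∈ S.flats with Z ⊆ F, S.signedCount Z = if F = ∅ then 1 else 0 := by
  rw [← Finset.sum_powerset_neg_one_pow_card]
  have hFC := (S.mem_flats.1 hF).1
  have hmap : ∀ A ∈ F.powerset, S.cl A ∈ S.flats.filter (fun Z => Z ⊆ F) := by
    intro A hA
    rw [Finset.mem_powerset] at hA
    exact Finset.mem_filter.2 ⟨S.cl_mem_flats_s1 (S.mem_of_subset hFC hA), S.cl_subset_s1 hF hA⟩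
  rw [← Finset.sum_fiberwise_of_maps_to hmap]
  refine Finset.sum_congr rfl fun Z hZ => ?_
  obtain ⟨_, hZF⟩ := Finset.mem_filter.1 hZ
  refine Finset.sum_congr ?_ fun _ _ => rfl
  ext A
  simp only [Finset.mem_filter, Finset.mem_powerset]
  constructor
  · rintro ⟨h1, rfl⟩
    exact ⟨(S.subset_cl_s1 h1).trans hZF, rfl⟩
  · rintro ⟨h1, h2⟩
    exact ⟨S.mem_of_subset hFC h1, h2⟩

theorem charPoly_eq_sum_signedCount :
    S.charPoly =
      ∑ F ∈ S.flats, Polynomial.C (S.signedCount F) * Polynomial.X ^ (S.rank - S.r F) := by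
  unfold charPoly
  rw [← Finset.sum_fiberwise_of_maps_to (fun A hA => S.cl_mem_flats_s1 hA)]
  refine Finset.sum_congr rfl fun F _ => ?_
  rw [signedCount, map_sum, Finset.sum_mul]
  refine Finset.sum_congr rfl fun A hA => ?_
  obtain ⟨hAC, rfl⟩ := Finset.mem_filter.1 hA
  rw [(S.cl_mem_s1 hAC).2]
  simp

theorem empty_mem_flats (hloopless : ¬ ∃ e : E, {e} ∈ S.C ∧ S.r {e} = 0) : ∅ ∈ S.flats := by
  obtain ⟨Y, hY⟩ := S.C_nonempty
  have h0 : ∅ ∈ S.C := S.mem_of_subset hY (Finset.empty_subset Y)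
  have hr : S.r ∅ = 0 := by simpa using S.r_le_card h0
  refine S.mem_flats.2 ⟨h0, Finset.eq_empty_of_forall_notMem fun e he => hloopless ⟨e, ?_⟩⟩
  simpa [mem_cl, hr] using he

end Helpers

end Semimatroid

/-- For a loopless semimatroid `𝒞`, the empty set is the least flat and
`χ(𝒞;t) = Σ_{X ∈ ℒ(𝒞)} μ(∅,X) t^{r(𝒞)−r(X)}`, where `μ` is the Möbius function of `ℒ(𝒞)`. -/
theorem Semimatroid.charPoly_eq_sum_moebius
    {E : Type*} [DecidableEq E] [Fintype E] (S : Semimatroid E)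
    (hloopless : ¬ ∃ e : E, {e} ∈ S.C ∧ S.r {e} = 0)
    (μ : Finset E → Finset E → ℤ)
    (hμ_refl : ∀ Z ∈ S.flats, μ Z Z = 1)
    (hμ_rec : ∀ X ∈ S.flats, ∀ Y ∈ S.flats, X ⊆ Y → X ≠ Y →
      ∑ Z ∈ S.flats.filter (fun Z => X ⊆ Z ∧ Z ⊆ Y), μ X Z = 0) :
    (∅ ∈ S.flats ∧ ∀ X ∈ S.flats, ∅ ⊆ X) ∧
    S.charPoly =
      ∑ X ∈ S.flats, Polynomial.C (μ ∅ X) * Polynomial.X ^ (S.rank - S.r X) := by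
  have h0 := S.empty_mem_flats hloopless
  refine ⟨⟨h0, fun X _ => Finset.empty_subset X⟩, ?_⟩
  have key : ∀ F : Finset E, F ∈ S.flats → S.signedCount F = μ ∅ F := by
    intro F
    induction F using Finset.strongInduction with
    | H F ih =>
      intro hF
      have h1 := S.sum_signedCount hF
      have h2 : ∑ Z ∈ S.flats with Z ⊆ F, μ ∅ Z = if F = ∅ then 1 else 0 := by
        split_ifs with h
        · subst h
          have : S.flats.filter (fun Z => Z ⊆ ∅) = {∅} := by
            ext Z
            simp only [Finset.mem_filter, Finset.subset_empty, Finset.mem_singleton]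
            exact ⟨fun h => h.2, fun h => ⟨h ▸ h0, h⟩⟩
          rw [this, Finset.sum_singleton, hμ_refl _ h0]
        · simpa using hμ_rec ∅ h0 F hF (Finset.empty_subset F) (Ne.symm h)
      have hm : F ∈ S.flats.filter (fun Z => Z ⊆ F) :=
        Finset.mem_filter.2 ⟨hF, Finset.Subset.refl F⟩
      rw [← Finset.add_sum_erase _ _ hm] at h1 h2
      have h3 : ∑ Z ∈ (S.flats.filter (fun Z => Z ⊆ F)).erase F, S.signedCount Z =
          ∑ Z ∈ (S.flats.filter (fun Z => Z ⊆ F)).erase F, μ ∅ Z := by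
        refine Finset.sum_congr rfl fun Z hZ => ?_
        obtain ⟨hne, hZ⟩ := Finset.mem_erase.1 hZ
        obtain ⟨hZ, hs⟩ := Finset.mem_filter.1 hZ
        exact ih Z (hs.ssubset_of_ne hne) hZ
      linarith
  rw [S.charPoly_eq_sum_signedCount]
  exact Finset.sum_congr rfl fun F hF => by rw [key F hF]
end

section
/- (Broken Circuit Theorem for semimatroids.) Let (E,𝒞,r) be a semimatroid and ≺ a linear order on E. Then for every 0 ≤ i ≤ r(𝒞), the unsigned Whitney number w_i(𝒞) equals the number of central sets X ∈ 𝒞 with |X| = i that contain no broken circuit of 𝒞 with respect to ≺. -/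
open scoped Classical

namespace Semimatroid

variable {E : Type*} [DecidableEq E] [Fintype E] (S : Semimatroid E)

/-- A circuit of a semimatroid: a minimal dependent central set. -/
def IsCircuit (K : Finset E) : Prop :=
  K ∈ S.C ∧ S.r K < K.card ∧ ∀ Y ⊂ K, S.r Y = Y.card

/-- The `i`-th unsigned Whitney number of the first kind:
`w_i(𝒞) = (−1)^i ⋅ (coefficient of t^{r(𝒞)−i} in χ(𝒞;t))`. -/
noncomputable def whitney (i : ℕ) : ℤ :=
  (-1 : ℤ) ^ i * S.charPoly.coeff (S.rank - i)

variable [LinearOrder E]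

/-- A broken circuit w.r.t. a linear order on `E`: a circuit with its least element removed. -/
def IsBrokenCircuit (B : Finset E) : Prop :=
  ∃ K, S.IsCircuit K ∧ ∃ e ∈ K, (∀ x ∈ K, e ≤ x) ∧ B = K.erase e

end Semimatroid

namespace Semimatroid

/-- `e` is active for `X` if it completes a broken circuit inside `X`. -/
def Active {E : Type*} [Fintype E] [LinearOrder E] (S : Semimatroid E)
    (X : Finset E) (e : E) : Prop :=
  ∃ K, S.IsCircuit K ∧ e ∈ K ∧ (∀ x ∈ K, e ≤ x) ∧ K.erase e ⊆ X

/-- Remove `e` if present, add it otherwise. -/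
def toggle {E : Type*} [LinearOrder E] (X : Finset E) (e : E) : Finset E :=
  if e ∈ X then X.erase e else insert e X

section aux
variable {E : Type*} [Fintype E] [LinearOrder E] (S : Semimatroid E)

theorem mem_toggle_of_ne {X : Finset E} {e x : E} (h : x ≠ e) : x ∈ toggle X e ↔ x ∈ X := by
  unfold toggle
  split_ifs <;> simp [h]

theorem toggle_toggle (X : Finset E) (e : E) : toggle (toggle X e) e = X := by
  by_cases h : e ∈ X <;> simp [toggle, h]

theorem toggle_ne (X : Finset E) (e : E) : toggle X e ≠ X := by
  by_cases h : e ∈ X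
  · simp [toggle, h]
  · simp [toggle, h]

theorem toggle_sign (X : Finset E) (e : E) :
    (-1 : ℤ) ^ X.card + (-1 : ℤ) ^ (toggle X e).card = 0 := by
  by_cases h : e ∈ X
  · have := Finset.card_erase_add_one h
    simp only [toggle, h, if_true]
    rw [← this, pow_succ]; ring
  · simp only [toggle, h, if_false]
    rw [Finset.card_insert_of_notMem h, pow_succ]; ring

theorem insert_aux {X K : Finset E} {e : E} (hX : X ∈ S.C) (hK : S.IsCircuit K) (he : e ∈ K)
    (hsub : K.erase e ⊆ X) (heX : e ∉ X) :
    insert e X ∈ S.C ∧ S.r (insert e X) = S.r X := by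
  obtain ⟨hKC, hlt, hmin⟩ := hK
  have h1 := hmin _ (Finset.erase_ssubset he)
  have hKe : K.erase e ∈ S.C := S.mem_of_subset hKC (Finset.erase_subset _ _)
  have h2 := S.r_mono hKe hKC (Finset.erase_subset _ _)
  have h3 := Finset.card_erase_add_one he
  have hint : K ∩ X = K.erase e := by
    ext x
    simp only [Finset.mem_inter, Finset.mem_erase]
    constructor
    · rintro ⟨a, b⟩
      exact ⟨fun h => heX (h ▸ b), a⟩
    · rintro ⟨a, b⟩
      exact ⟨b, hsub (Finset.mem_erase.2 ⟨a, b⟩)⟩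
  have hun : K ∪ X = insert e X := by
    ext x
    simp only [Finset.mem_union, Finset.mem_insert]
    constructor
    · rintro (a | a)
      · by_cases h : x = e
        · exact Or.inl h
        · exact Or.inr (hsub (Finset.mem_erase.2 ⟨h, a⟩))
      · exact Or.inr a
    · rintro (a | a)
      · exact Or.inl (a ▸ he)
      · exact Or.inr a
  have h4 : S.r K = S.r (K ∩ X) := by rw [hint]; omega
  have h5 := S.union_mem hKC hX h4
  have h6 := S.submodular hKC hX h5
  rw [hun] at h5 h6
  have h7 := S.r_mono hX h5 (Finset.subset_insert _ _)
  exact ⟨h5, by omega⟩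

theorem toggle_aux {X : Finset E} {e : E} (hX : X ∈ S.C) (h : S.Active X e) :
    toggle X e ∈ S.C ∧ S.r (toggle X e) = S.r X := by
  obtain ⟨K, hK, he, -, hsub⟩ := h
  by_cases heX : e ∈ X
  · have hC : X.erase e ∈ S.C := S.mem_of_subset hX (Finset.erase_subset _ _)
    have := S.insert_aux hC hK he (fun x hx => Finset.mem_erase.2
      ⟨(Finset.mem_erase.1 hx).1, hsub hx⟩) (Finset.notMem_erase _ _)
    rw [Finset.insert_erase heX] at this
    simp only [toggle, heX, if_true]
    exact ⟨hC, this.2.symm⟩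
  · simp only [toggle, heX, if_false]
    exact S.insert_aux hX hK he hsub heX

theorem active_toggle {X : Finset E} {e f : E} (hef : e ≤ f) :
    S.Active (toggle X e) f ↔ S.Active X f := by
  unfold Active
  refine exists_congr fun K => and_congr_right fun _ => and_congr_right fun _ =>
    and_congr_right fun hm => ?_
  refine forall_congr' fun x => forall_congr' fun hx => ?_
  obtain ⟨h1, h2⟩ := Finset.mem_erase.1 hx
  have : x ≠ e := fun h => h1 (le_antisymm (h ▸ hef) (hm x h2))
  exact mem_toggle_of_ne this

/-- The set of active elements. -/
noncomputable def act (X : Finset E) : Finset E := Finset.univ.filter (S.Active X)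

theorem mem_act {X : Finset E} {e : E} : e ∈ S.act X ↔ S.Active X e := by simp [act]

theorem max_toggle {X : Finset E} (h : (S.act X).Nonempty)
    (h' : (S.act (toggle X ((S.act X).max' h))).Nonempty) :
    (S.act (toggle X ((S.act X).max' h))).max' h' = (S.act X).max' h := by
  set e := (S.act X).max' h with he
  have hmem : e ∈ S.act X := Finset.max'_mem _ _
  have h1 : e ∈ S.act (toggle X e) :=
    (S.mem_act).2 ((S.active_toggle le_rfl).2 ((S.mem_act).1 hmem))
  have h2 : e ≤ (S.act (toggle X e)).max' h' := Finset.le_max' _ _ h1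
  refine le_antisymm ?_ h2
  have h3 := Finset.max'_mem _ h'
  exact Finset.le_max' _ _ ((S.mem_act).2 ((S.active_toggle h2).1 ((S.mem_act).1 h3)))

theorem act_toggle_nonempty {X : Finset E} (h : (S.act X).Nonempty) :
    (S.act (toggle X ((S.act X).max' h))).Nonempty :=
  ⟨_, (S.mem_act).2 ((S.active_toggle le_rfl).2 ((S.mem_act).1 (Finset.max'_mem _ h)))⟩

theorem act_nonempty_iff {X : Finset E} :
    ¬ (S.act X).Nonempty ↔ ∀ B : Finset E, S.IsBrokenCircuit B → ¬ B ⊆ X := by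
  constructor
  · rintro h B ⟨K, hK, e, he, hm, rfl⟩ hB
    exact h ⟨e, (S.mem_act).2 ⟨K, hK, he, hm, hB⟩⟩
  · rintro h ⟨e, he⟩
    obtain ⟨K, hK, he, hm, hs⟩ := (S.mem_act).1 he
    exact h _ ⟨K, hK, e, he, hm, rfl⟩ hs

theorem indep_of_no_act {X : Finset E} (hX : X ∈ S.C) (h : ¬ (S.act X).Nonempty) :
    S.r X = X.card := by
  by_contra hne
  have key : ∀ n, ∀ Y : Finset E, Y.card = n → Y ⊆ X → S.r Y = Y.card := by
    intro n
    induction n using Nat.strong_induction_on with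
    | _ n ih =>
      intro Y hn hY
      by_contra hd
      have hYC := S.mem_of_subset hX hY
      have hle := S.r_le_card hYC
      have hc : S.IsCircuit Y := ⟨hYC, by omega, fun Z hZ =>
        ih Z.card (hn ▸ Finset.card_lt_card hZ) Z rfl (hZ.1.trans hY)⟩
      have hYn : Y.Nonempty := by
        rw [← Finset.card_pos]; omega
      exact h ⟨Y.min' hYn, (S.mem_act).2 ⟨Y, hc, Finset.min'_mem _ _,
        fun x hx => Finset.min'_le _ _ hx, (Finset.erase_subset _ _).trans hY⟩⟩
  exact hne (key _ X rfl subset_rfl)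

theorem whitney_eq (i : ℕ) (hi : i ≤ S.rank) :
    S.whitney i = (-1) ^ i * ∑ A ∈ S.C.filter (fun A => S.r A = i), (-1 : ℤ) ^ A.card := by
  unfold whitney charPoly
  congr 1
  rw [Polynomial.finsetSum_coeff, Finset.sum_filter]
  refine Finset.sum_congr rfl fun A hA => ?_
  have hr : S.r A ≤ S.rank := Finset.le_sup (f := S.r) hA
  have : ((-1 : Polynomial ℤ) ^ A.card) = Polynomial.C ((-1 : ℤ) ^ A.card) := by simp
  rw [this, Polynomial.coeff_C_mul, Polynomial.coeff_X_pow]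
  by_cases h : S.r A = i
  · simp [h]
  · have h2 : S.rank - i ≠ S.rank - S.r A := by omega
    simp [h, h2]

theorem sum_act_eq_zero (i : ℕ) :
    ∑ A ∈ (S.C.filter (fun A => S.r A = i)).filter (fun A => (S.act A).Nonempty),
      (-1 : ℤ) ^ A.card = 0 := by
  refine Finset.sum_involution
    (fun A hA => toggle A ((S.act A).max' (Finset.mem_filter.1 hA).2)) ?_ ?_ ?_ ?_
  · intro A hA
    exact toggle_sign _ _
  · intro A hA _
    exact toggle_ne _ _
  · intro A hA
    obtain ⟨h1, h2⟩ := Finset.mem_filter.1 hA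
    obtain ⟨h3, h4⟩ := Finset.mem_filter.1 h1
    have := S.toggle_aux h3 ((S.mem_act).1 (Finset.max'_mem _ h2))
    exact Finset.mem_filter.2 ⟨Finset.mem_filter.2 ⟨this.1, this.2.trans h4⟩,
      S.act_toggle_nonempty h2⟩
  · intro A hA
    have h2 := (Finset.mem_filter.1 hA).2
    rw [S.max_toggle h2 (S.act_toggle_nonempty h2)]
    exact toggle_toggle _ _

end aux

end Semimatroid

/-- **Broken Circuit Theorem for semimatroids.** For `0 ≤ i ≤ r(𝒞)`,
the unsigned Whitney number `w_i(𝒞)` equals the number of central sets of size `i`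
containing no broken circuit. -/
theorem Semimatroid.whitney_eq_card_no_broken_circuit
    {E : Type*} [Fintype E] [LinearOrder E] (S : Semimatroid E)
    (i : ℕ) (hi : i ≤ S.rank) :
    S.whitney i =
      ((S.C.filter fun X : Finset E => X.card = i ∧
        ∀ B : Finset E, S.IsBrokenCircuit B → ¬ B ⊆ X).card : ℤ) := by
  rw [S.whitney_eq i hi, ← Finset.sum_filter_add_sum_filter_not _ (fun A => (S.act A).Nonempty),
    S.sum_act_eq_zero i, zero_add]
  have hset : (S.C.filter (fun A => S.r A = i)).filter (fun A => ¬ (S.act A).Nonempty) =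
      S.C.filter fun X : Finset E => X.card = i ∧
        ∀ B : Finset E, S.IsBrokenCircuit B → ¬ B ⊆ X := by
    ext A
    simp only [Finset.mem_filter, ← S.act_nonempty_iff]
    constructor
    · rintro ⟨⟨h1, h2⟩, h3⟩
      exact ⟨h1, (S.indep_of_no_act h1 h3).symm.trans h2, h3⟩
    · rintro ⟨h1, h2, h3⟩
      exact ⟨⟨h1, (S.indep_of_no_act h1 h3).trans h2⟩, h3⟩
  rw [hset, Finset.sum_congr rfl (g := fun _ => (-1 : ℤ) ^ i)
    (fun A hA => by rw [(Finset.mem_filter.1 hA).2.1])]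
  rw [Finset.sum_const, nsmul_eq_mul, mul_left_comm, ← pow_add, Even.neg_one_pow ⟨i, rfl⟩, mul_one]
end

section
/- Let (E,𝒞,r) be a semimatroid without loops, and define r̂ : 2^E → ℕ by r̂(X) = max{r(Y) : Y ⊆ X, Y ∈ 𝒞}. Define w_i(M_𝒞) by Σ_{X ⊆ E} (−1)^{|X|} t^{r̂(E)−r̂(X)} = Σ_{i=0}^{r̂(E)} (−1)^i w_i(M_𝒞) t^{r̂(E)−i}. Then w_i(M_𝒞) ≤ w_i(𝒞) for every 0 ≤ i ≤ r(𝒞). -/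
namespace Semimatroid

variable {E : Type*} [DecidableEq E] [Fintype E] (S : Semimatroid E)

/-- The extension `r̂(X) = max{r(Y) : Y ⊆ X, Y ∈ 𝒞}` of the rank function to all of `2^E`;
it is the rank function of the matroid `M_𝒞`. -/
def rhat (X : Finset E) : ℕ := (S.C.filter fun Y => Y ⊆ X).sup S.r

/-- The characteristic polynomial of the matroid `M_𝒞` (Whitney rank formula):
`χ(M_𝒞;t) = Σ_{X ⊆ E} (−1)^{|X|} t^{r̂(E)−r̂(X)}`. -/
noncomputable def matCharPoly : Polynomial ℤ :=
  ∑ A ∈ (Finset.univ : Finset E).powerset,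
    (-1 : Polynomial ℤ) ^ A.card * Polynomial.X ^ (S.rhat Finset.univ - S.rhat A)

/-- The `i`-th unsigned Whitney number of the first kind of the matroid `M_𝒞`. -/
noncomputable def matWhitney (i : ℕ) : ℤ :=
  (-1 : ℤ) ^ i * S.matCharPoly.coeff (S.rhat Finset.univ - i)

end Semimatroid

namespace WhitneyAux

open Finset

section

variable {E : Type*} [DecidableEq E] [Fintype E]

/-- elements of `X` above `e` -/
def up (f : E → ℕ) (X : Finset E) (e : E) : Finset E := X.filter fun g => f e < f g

/-- externally or internally active elements -/
def act (C : Finset (Finset E)) (ρ : Finset E → ℕ) (f : E → ℕ) (X : Finset E) : Finset E :=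
  univ.filter fun e => insert e (up f X e) ∈ C ∧ ρ (insert e (up f X e)) = ρ (up f X e)

def tog (X : Finset E) (e : E) : Finset E := if e ∈ X then X.erase e else insert e X

lemma up_tog (f : E → ℕ) (X : Finset E) (e g : E) (h : f e ≤ f g) :
    up f (tog X e) g = up f X g := by
  ext x
  unfold up tog
  by_cases hx : x = e
  · subst hx
    simp [mem_filter]
    omega
  · split_ifs <;> simp [hx]

lemma tog_tog (X : Finset E) (e : E) : tog (tog X e) e = X := by
  unfold tog
  by_cases h : e ∈ X <;> simp [h]

lemma tog_ne (X : Finset E) (e : E) : tog X e ≠ X := by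
  unfold tog
  by_cases h : e ∈ X
  · simp [h]
  · simp [h]

lemma sign_tog (X : Finset E) (e : E) : (-1 : ℤ) ^ X.card + (-1) ^ (tog X e).card = 0 := by
  unfold tog
  by_cases h : e ∈ X
  · simp only [h, if_true]
    rw [← card_erase_add_one h, pow_succ]; ring
  · simp only [h, if_false]
    rw [card_insert_of_notMem h, pow_succ]; ring

lemma mem_act {C : Finset (Finset E)} {ρ : Finset E → ℕ} {f : E → ℕ} {X : Finset E} {e : E} :
    e ∈ act C ρ f X ↔
      insert e (up f X e) ∈ C ∧ ρ (insert e (up f X e)) = ρ (up f X e) := by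
  simp [act]

lemma up_subset (f : E → ℕ) (X : Finset E) (e : E) : up f X e ⊆ X := filter_subset _ _

lemma tog_mem {C : Finset (Finset E)} {ρ : Finset E → ℕ} {f : E → ℕ}
    (H1 : ∀ ⦃X Y : Finset E⦄, X ∈ C → Y ⊆ X → Y ∈ C)
    (H4 : ∀ ⦃X Y : Finset E⦄ (e : E), X ∈ C → Y ⊆ X → insert e Y ∈ C →
      ρ (insert e Y) = ρ Y → insert e X ∈ C ∧ ρ (insert e X) = ρ X)
    {X : Finset E} (hX : X ∈ C) {e : E} (he : e ∈ act C ρ f X) :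
    tog X e ∈ C ∧ ρ (tog X e) = ρ X := by
  obtain ⟨h1, h2⟩ := mem_act.1 he
  unfold tog
  by_cases h : e ∈ X
  · simp only [h, if_true]
    have hc := H1 hX (erase_subset e X)
    have hs : up f X e ⊆ X.erase e := by
      intro x hx
      have := mem_filter.1 hx
      refine mem_erase.2 ⟨?_, this.1⟩
      rintro rfl
      exact lt_irrefl _ this.2
    have := (H4 e hc hs h1 h2).2
    rw [insert_erase h] at this
    exact ⟨hc, this.symm⟩
  · simp only [h, if_false]
    exact H4 e hX (up_subset f X e) h1 h2

lemma exists_top (f : E → ℕ) (A : Finset E) :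
    A.Nonempty → ∃ e ∈ A, ∀ g ∈ A, f g ≤ f e := fun h => exists_max_image A f h

lemma top_tog {C : Finset (Finset E)} {ρ : Finset E → ℕ} {f : E → ℕ}
    {X : Finset E} {e : E} (he : e ∈ act C ρ f X) (hm : ∀ g ∈ act C ρ f X, f g ≤ f e) :
    e ∈ act C ρ f (tog X e) ∧ ∀ g ∈ act C ρ f (tog X e), f g ≤ f e := by
  constructor
  · rw [mem_act, up_tog f X e e le_rfl]
    exact mem_act.1 he
  · intro g hg
    by_contra hlt
    rw [mem_act, up_tog f X e g (by omega)] at hg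
    exact hlt (hm g (mem_act.2 hg))

lemma sum_act_nonempty {C : Finset (Finset E)} {ρ : Finset E → ℕ} {f : E → ℕ}
    (hf : Function.Injective f)
    (H1 : ∀ ⦃X Y : Finset E⦄, X ∈ C → Y ⊆ X → Y ∈ C)
    (H4 : ∀ ⦃X Y : Finset E⦄ (e : E), X ∈ C → Y ⊆ X → insert e Y ∈ C →
      ρ (insert e Y) = ρ Y → insert e X ∈ C ∧ ρ (insert e X) = ρ X) (i : ℕ) :
    ∑ A ∈ C.filter (fun A => ρ A = i ∧ (act C ρ f A).Nonempty), (-1 : ℤ) ^ A.card = 0 := by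
  have hex : ∀ A ∈ C.filter (fun A => ρ A = i ∧ (act C ρ f A).Nonempty),
      ∃ e ∈ act C ρ f A, ∀ g ∈ act C ρ f A, f g ≤ f e := fun A hA =>
    exists_top f _ (mem_filter.1 hA).2.2
  choose t ht1 ht2 using hex
  have hmem : ∀ A hA, tog A (t A hA) ∈
      C.filter (fun A => ρ A = i ∧ (act C ρ f A).Nonempty) := by
    intro A hA
    have h := mem_filter.1 hA
    have h2 := tog_mem H1 H4 h.1 (ht1 A hA)
    exact mem_filter.2 ⟨h2.1, h2.2.trans h.2.1, ⟨_, (top_tog (ht1 A hA) (ht2 A hA)).1⟩⟩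
  refine sum_involution (fun A hA => tog A (t A hA)) (fun A hA => sign_tog _ _)
    (fun A hA _ => tog_ne _ _) hmem ?_
  intro A hA
  have h := top_tog (ht1 A hA) (ht2 A hA)
  have : t _ (hmem A hA) = t A hA := by
    apply hf
    apply le_antisymm
    · exact h.2 _ (ht1 _ (hmem A hA))
    · exact ht2 _ (hmem A hA) _ h.1
  simp only [this]
  exact tog_tog _ _

lemma card_le_of_act_empty {C : Finset (Finset E)} {ρ : Finset E → ℕ} {f : E → ℕ}
    (hf : Function.Injective f)
    (H1 : ∀ ⦃X Y : Finset E⦄, X ∈ C → Y ⊆ X → Y ∈ C)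
    (H3 : ∀ ⦃X Y : Finset E⦄, X ∈ C → Y ∈ C → X ⊆ Y → ρ X ≤ ρ Y)
    (n : ℕ) : ∀ X : Finset E, X.card = n → X ∈ C →
      (∀ e ∈ X, e ∉ act C ρ f X) → n ≤ ρ X := by
  induction n with
  | zero => intros; omega
  | succ n ih =>
    intro X hn hX h
    obtain ⟨e, he, hmin⟩ := exists_min_image X f (card_pos.1 (by omega))
    have hup : up f X e = X.erase e := by
      ext x
      simp only [up, mem_filter, mem_erase]
      constructor
      · rintro ⟨a, b⟩
        exact ⟨by rintro rfl; omega, a⟩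
      · rintro ⟨a, b⟩
        exact ⟨b, lt_of_le_of_ne (hmin x b) fun hh => a (hf hh).symm⟩
    have hc := H1 hX (erase_subset e X)
    have h1 := h e he
    rw [mem_act, hup, insert_erase he] at h1
    have h2 : ρ X ≠ ρ (X.erase e) := fun hh => h1 ⟨hX, hh⟩
    have h3 := H3 hc hX (erase_subset e X)
    have h4 := ih (X.erase e) (by rw [card_erase_of_mem he]; omega) hc (by
      intro g hg hga
      have hgX := mem_of_mem_erase hg
      apply h g hgX
      have : up f (X.erase e) g = up f X g := by
        have := up_tog f X e g (hmin g hgX)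
        simpa [tog, he] using this
      rw [mem_act, this] at hga
      exact mem_act.2 hga)
    omega

lemma sum_eq {C : Finset (Finset E)} {ρ : Finset E → ℕ} {f : E → ℕ}
    (hf : Function.Injective f)
    (H1 : ∀ ⦃X Y : Finset E⦄, X ∈ C → Y ⊆ X → Y ∈ C)
    (H2 : ∀ ⦃X : Finset E⦄, X ∈ C → ρ X ≤ X.card)
    (H3 : ∀ ⦃X Y : Finset E⦄, X ∈ C → Y ∈ C → X ⊆ Y → ρ X ≤ ρ Y)
    (H4 : ∀ ⦃X Y : Finset E⦄ (e : E), X ∈ C → Y ⊆ X → insert e Y ∈ C →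
      ρ (insert e Y) = ρ Y → insert e X ∈ C ∧ ρ (insert e X) = ρ X) (i : ℕ) :
    ∑ A ∈ C.filter (fun A => ρ A = i), (-1 : ℤ) ^ A.card =
      (-1) ^ i * ((C.filter (fun A => ρ A = i ∧ ¬ (act C ρ f A).Nonempty)).card : ℤ) := by
  rw [← sum_filter_add_sum_filter_not (C.filter (fun A => ρ A = i))
    (fun A => (act C ρ f A).Nonempty), filter_filter, filter_filter,
    sum_act_nonempty hf H1 H4 i, zero_add]
  rw [sum_congr rfl (g := fun _ => (-1 : ℤ) ^ i)]
  · rw [sum_const, nsmul_eq_mul, mul_comm]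
  · intro A hA
    obtain ⟨hA, hi, hne⟩ := mem_filter.1 hA
    have := card_le_of_act_empty hf H1 H3 _ A rfl hA (fun e _ he => hne ⟨e, he⟩)
    have := H2 hA
    congr 1
    omega

lemma coeff_sum (C : Finset (Finset E)) (ρ : Finset E → ℕ) (R i : ℕ) (hi : i ≤ R)
    (hR : ∀ A ∈ C, ρ A ≤ R) :
    (∑ A ∈ C, (-1 : Polynomial ℤ) ^ A.card * Polynomial.X ^ (R - ρ A)).coeff (R - i) =
      ∑ A ∈ C.filter (fun A => ρ A = i), (-1 : ℤ) ^ A.card := by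
  rw [Polynomial.finset_sum_coeff, sum_filter]
  refine sum_congr rfl fun A hA => ?_
  have h : (-1 : Polynomial ℤ) ^ A.card = Polynomial.C ((-1 : ℤ) ^ A.card) := by simp
  rw [h, Polynomial.coeff_C_mul, Polynomial.coeff_X_pow]
  have := hR A hA
  by_cases hh : ρ A = i
  · simp [hh]
  · rw [if_neg (by omega), if_neg hh, mul_zero]

variable (S : Semimatroid E)

lemma cl_prop ⦃X Y : Finset E⦄ (e : E) (hX : X ∈ S.C) (hYX : Y ⊆ X) (hY : insert e Y ∈ S.C)
    (h : S.r (insert e Y) = S.r Y) : insert e X ∈ S.C ∧ S.r (insert e X) = S.r X := by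
  have hYC := S.mem_of_subset hX hYX
  have hI : insert e Y ∩ X ∈ S.C := S.mem_of_subset hX inter_subset_right
  have h1 := S.r_mono hYC hI (subset_inter (subset_insert _ _) hYX)
  have h2 := S.r_mono hI hY inter_subset_left
  have hU : insert e Y ∪ X = insert e X := by
    rw [insert_union, union_eq_right.2 hYX]
  have h3 := S.union_mem hY hX (by omega)
  have h4 := S.submodular hY hX h3
  rw [hU] at h3 h4
  have h5 := S.r_mono hX h3 (subset_insert _ _)
  exact ⟨h3, by omega⟩

lemma le_rhat {X Y : Finset E} (hY : Y ∈ S.C) (h : Y ⊆ X) : S.r Y ≤ S.rhat X :=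
  le_sup (f := S.r) (mem_filter.2 ⟨hY, h⟩)

lemma empty_mem : ∅ ∈ S.C := by
  obtain ⟨X, hX⟩ := S.C_nonempty
  exact S.mem_of_subset hX (empty_subset X)

lemma exists_rhat (X : Finset E) : ∃ Y ∈ S.C, Y ⊆ X ∧ S.r Y = S.rhat X := by
  obtain ⟨Y, hY, h⟩ := exists_mem_eq_sup (S.C.filter fun Y => Y ⊆ X)
    ⟨∅, mem_filter.2 ⟨empty_mem S, empty_subset X⟩⟩ S.r
  have := mem_filter.1 hY
  exact ⟨Y, this.1, this.2, h.symm⟩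

lemma rhat_mono {X Y : Finset E} (h : X ⊆ Y) : S.rhat X ≤ S.rhat Y := by
  obtain ⟨Z, hZ, hs, he⟩ := exists_rhat S X
  rw [← he]
  exact le_rhat S hZ (hs.trans h)

lemma rhat_eq {X : Finset E} (h : X ∈ S.C) : S.rhat X = S.r X := by
  obtain ⟨Z, hZ, hs, he⟩ := exists_rhat S X
  apply le_antisymm
  · rw [← he]; exact S.r_mono hZ h hs
  · exact le_rhat S h subset_rfl

lemma rhat_le_card (X : Finset E) : S.rhat X ≤ X.card := by
  obtain ⟨Z, hZ, hs, he⟩ := exists_rhat S X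
  rw [← he]
  exact (S.r_le_card hZ).trans (card_le_card hs)

lemma mem_of_rhat_eq_card {X : Finset E} (h : S.rhat X = X.card) : X ∈ S.C := by
  obtain ⟨Z, hZ, hs, he⟩ := exists_rhat S X
  have := S.r_le_card hZ
  rwa [← eq_of_subset_of_card_le hs (by omega)]

lemma rhat_univ : S.rhat univ = S.rank := by
  simp [Semimatroid.rhat, Semimatroid.rank]

lemma rhat_cl {X Y : Finset E} (e : E) (hYX : Y ⊆ X) (h : S.rhat (insert e Y) = S.rhat Y) :
    S.rhat (insert e X) = S.rhat X := by
  by_contra hne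
  have hlt : S.rhat X < S.rhat (insert e X) :=
    lt_of_le_of_ne (rhat_mono S (subset_insert _ _)) (Ne.symm hne)
  obtain ⟨Z, hZ, hZs, hZe⟩ := exists_rhat S (insert e X)
  obtain ⟨W, hW, hWs, hWe⟩ := exists_rhat S Y
  obtain ⟨V, hV, hmax⟩ := exists_max_image
    (S.C.filter fun V => W ⊆ V ∧ V ⊆ W ∪ Z) card
    ⟨W, mem_filter.2 ⟨hW, subset_rfl, subset_union_left⟩⟩
  obtain ⟨hVC, hWV, hVs⟩ := mem_filter.1 hV
  have hVr : S.r Z ≤ S.r V := by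
    by_contra hl
    obtain ⟨g, hg, hgC⟩ := S.augment hVC hZ (not_le.1 hl)
    obtain ⟨hgZ, hgV⟩ := mem_sdiff.1 hg
    have := hmax (insert g V) (mem_filter.2 ⟨hgC, hWV.trans (subset_insert _ _),
      insert_subset (mem_union_right _ hgZ) hVs⟩)
    rw [card_insert_of_notMem hgV] at this
    omega
  have hVX : V ⊆ insert e X :=
    hVs.trans (union_subset (hWs.trans (hYX.trans (subset_insert _ _))) hZs)
  have hVe : V.erase e ⊆ X := by
    intro x hx
    obtain ⟨a, b⟩ := mem_erase.1 hx
    exact mem_of_mem_insert_of_ne (hVX b) a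
  have hVeC := S.mem_of_subset hVC (erase_subset e V)
  have hVer := le_rhat S hVeC hVe
  have heV : e ∈ V := by
    by_contra hn
    rw [erase_eq_of_notMem hn] at hVer
    omega
  have hWC : insert e W ∈ S.C := S.mem_of_subset hVC (insert_subset heV hWV)
  have heW : e ∉ W := by
    intro heW
    have : X = insert e X := (insert_eq_of_mem (hYX (hWs heW))).symm
    rw [← this] at hlt
    omega
  have h1 := S.r_mono hW hWC (subset_insert _ _)
  have h2 := le_rhat S hWC (insert_subset_insert e hWs)
  have h3 := (cl_prop S e hVeC (subset_erase.2 ⟨hWV, heW⟩) hWC (by omega)).2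
  rw [insert_erase heV] at h3
  omega

end

end WhitneyAux

/-- For a loopless semimatroid, `w_i(M_𝒞) ≤ w_i(𝒞)` for `0 ≤ i ≤ r(𝒞)`. -/
theorem Semimatroid.matWhitney_le_whitney
    {E : Type*} [DecidableEq E] [Fintype E] (S : Semimatroid E)
    (hloopless : ¬ ∃ e : E, {e} ∈ S.C ∧ S.r {e} = 0)
    (i : ℕ) (hi : i ≤ S.rank) :
    S.matWhitney i ≤ S.whitney i := by
  classical
  obtain ⟨f, hf⟩ : ∃ f : E → ℕ, Function.Injective f :=
    ⟨fun e => (Fintype.equivFin E e : ℕ),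
      fun a b h => (Fintype.equivFin E).injective (Fin.ext h)⟩
  have hC := WhitneyAux.sum_eq hf S.mem_of_subset S.r_le_card S.r_mono
    (WhitneyAux.cl_prop S) i
  have hM := WhitneyAux.sum_eq (C := (Finset.univ : Finset E).powerset) (ρ := S.rhat) hf
    (fun _ _ _ _ => by simp) (fun X _ => WhitneyAux.rhat_le_card S X)
    (fun _ _ _ _ h => WhitneyAux.rhat_mono S h)
    (fun _ _ e _ h _ h' => ⟨by simp, WhitneyAux.rhat_cl S e h h'⟩) i
  have hs : (-1 : ℤ) ^ i * (-1) ^ i = 1 := by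
    rw [← mul_pow]; simp
  rw [Semimatroid.matWhitney, Semimatroid.whitney, Semimatroid.matCharPoly,
    Semimatroid.charPoly,
    WhitneyAux.coeff_sum _ _ _ _ (by rwa [WhitneyAux.rhat_univ])
      (fun A _ => WhitneyAux.rhat_mono S (Finset.subset_univ A)),
    WhitneyAux.coeff_sum _ _ _ _ hi (fun A hA => Finset.le_sup (f := S.r) hA),
    hC, hM, ← mul_assoc, ← mul_assoc, hs, one_mul, one_mul]
  norm_cast
  apply Finset.card_le_card
  intro A hA
  obtain ⟨hA1, hAi, hne⟩ := Finset.mem_filter.1 hA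
  have hcard := WhitneyAux.card_le_of_act_empty (C := (Finset.univ : Finset E).powerset)
    (ρ := S.rhat) hf (fun _ _ _ _ => by simp) (fun _ _ _ _ h => WhitneyAux.rhat_mono S h)
    _ A rfl hA1 (fun e _ he => hne ⟨e, he⟩)
  have hAC : A ∈ S.C :=
    WhitneyAux.mem_of_rhat_eq_card S (le_antisymm (WhitneyAux.rhat_le_card S A) hcard)
  refine Finset.mem_filter.2 ⟨hAC, by rw [← WhitneyAux.rhat_eq S hAC]; exact hAi, ?_⟩
  rintro ⟨e, he⟩
  obtain ⟨h1, h2⟩ := WhitneyAux.mem_act.1 he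
  refine hne ⟨e, WhitneyAux.mem_act.2 ⟨by simp, ?_⟩⟩
  rw [WhitneyAux.rhat_eq S h1,
    WhitneyAux.rhat_eq S (S.mem_of_subset h1 (Finset.subset_insert _ _)), h2]
end
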